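/- Let R be a commutative Noetherian ring, 𝔞 a proper ideal of R, t ≥ 0 an integer, and M an R-module such that Ext^i_R(R/𝔞, M) is a finitely generated R-module for every i ≥ 0. If H^i_𝔞(M) belongs to FD_{≤0} for every integer 0 ≤ i < t (in particular, if dim_R H^i_𝔞(M) ≤ 0 for all i < t, or if dim R ≤ 1), then H^i_𝔞(M) is 𝔞-cofinite for every 0 ≤ i < t and the R-module Hom_R(R/𝔞, H^t_𝔞(M)) is finitely generated. -/

import Mathlib

open CategoryTheory

universe u

/-- The `R`-module `Ext^i_R(N, M)` for two `R`-modules (objects of `ModuleCat R`). -/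
noncomputable def extObj {R : Type u} [CommRing R] (N M : ModuleCat.{u} R) (i : ℕ) :
    ModuleCat.{u} R :=
  ((Ext R (ModuleCat.{u} R) i).obj (Opposite.op N)).obj M

/-- The `R`-module `Ext^i_R(R/𝔞, M)`. -/
noncomputable def extIdeal {R : Type u} [CommRing R] (𝔞 : Ideal R) (i : ℕ)
    (M : ModuleCat.{u} R) : ModuleCat.{u} R :=
  extObj (ModuleCat.of R (R ⧸ 𝔞)) M i

/-- An `R`-module `M` is `𝔞`-cofinite if `Supp_R M ⊆ V(𝔞)` and `Ext^i_R(R/𝔞, M)` is a finitely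
generated `R`-module for every `i ≥ 0`. -/
def IsCofinite {R : Type u} [CommRing R] (𝔞 : Ideal R) (M : ModuleCat.{u} R) : Prop :=
  Module.support R M ⊆ PrimeSpectrum.zeroLocus (𝔞 : Set R) ∧
    ∀ i : ℕ, Module.Finite R (extIdeal 𝔞 i M)

/-- The Krull dimension `dim_R M` of an `R`-module `M`: the Krull dimension of its support,
i.e. the supremum of `dim R/𝔭` over primes `𝔭` in the support of `M`. -/
noncomputable def moduleDim (R : Type u) [CommRing R] (M : Type u) [AddCommGroup M]
    [Module R M] : WithBot ℕ∞ :=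
  Order.krullDim (Module.support R M)

/-- An `R`-module `M` is in `FD_{≤n}` if there is a finitely generated submodule `N ⊆ M`
with `dim_R (M/N) ≤ n`. -/
def MemFD (R : Type u) [CommRing R] (n : ℕ) (M : Type u) [AddCommGroup M] [Module R M] : Prop :=
  ∃ N : Submodule R M, N.FG ∧ moduleDim R (M ⧸ N) ≤ (n : WithBot ℕ∞)

/-- An `R`-module `M` is `𝔞`-torsion if every element is annihilated by some power of `𝔞`. -/
def IsTorsionIdeal {R : Type u} [CommRing R] (𝔞 : Ideal R) (M : Type u) [AddCommGroup M]
    [Module R M] : Prop :=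
  ∀ m : M, ∃ n : ℕ, ∀ a ∈ 𝔞 ^ n, a • m = 0

/-- The arithmetic rank of an ideal `𝔞`: the least `n` such that there exist `a₁, …, aₙ ∈ R`
with `Rad (a₁, …, aₙ) = Rad 𝔞`. -/
noncomputable def arithRank {R : Type u} [CommRing R] (𝔞 : Ideal R) : ℕ :=
  sInf {n : ℕ | ∃ f : Fin n → R, (Ideal.span (Set.range f)).radical = 𝔞.radical}

namespace CategoryTheory.ProjectiveResolution

open Limits

variable {R : Type u} [CommRing R] {X X' : ModuleCat.{u} R}

lemma smul_extMk (P : ProjectiveResolution X) {Y : ModuleCat.{u} R} {n : ℕ} (r : R)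
    (f : P.complex.X n ⟶ Y) (m : ℕ) (hm : n + 1 = m) (hf : P.complex.d m n ≫ f = 0) :
    r • P.extMk f m hm hf = P.extMk (r • f) m hm (by simp [hf]) := by
  rw [Abelian.Ext.smul_eq_comp_mk₀, extMk_comp_mk₀]
  simp

lemma extMk_zero_eq_zero_iff (P : ProjectiveResolution X) {Y : ModuleCat.{u} R}
    (f : P.complex.X 0 ⟶ Y) (m : ℕ) (hm : 0 + 1 = m) (hf : P.complex.d m 0 ≫ f = 0) :
    P.extMk f m hm hf = 0 ↔ f = 0 := by
  refine ⟨fun h => ?_, fun h => by subst h; exact P.extMk_zero m hm⟩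
  rw [← P.extEquivCohomologyClass.apply_eq_iff_eq,
    extEquivCohomologyClass_extMk, extEquivCohomologyClass_zero,
    CochainComplex.HomComplex.CohomologyClass.mk_eq_zero_iff,
    CochainComplex.HomComplex.Cocycle.toSingleMk_mem_coboundaries_iff _ _ _ _ _ 1 (by simp)] at h
  obtain ⟨g, hg⟩ := h
  have hz : IsZero (P.cochainComplex.X 1) := P.cochainComplex.isZero_of_isStrictlyLE 0 1
  rw [← cancel_epi (P.cochainComplexXIso (-(0 : ℕ)) 0 rfl).hom, comp_zero]
  exact hg.symm.trans (by rw [hz.eq_of_src g 0, comp_zero])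

/-- The `n`-cocycles of the complex `Hom(P, Y)`. -/
def cocycles (P : ProjectiveResolution X) (Y : ModuleCat.{u} R) (n : ℕ) :
    Submodule R (P.complex.X n ⟶ Y) :=
  LinearMap.ker (Linear.leftComp R Y (P.complex.d (n + 1) n))

lemma mem_cocycles (P : ProjectiveResolution X) (Y : ModuleCat.{u} R) (n : ℕ)
    (f : P.complex.X n ⟶ Y) : f ∈ P.cocycles Y n ↔ P.complex.d (n + 1) n ≫ f = 0 :=
  Iff.rfl

/-- The class in `Ext` of a cocycle of the complex `Hom(P, Y)`. -/
noncomputable def cocyclesToExt (P : ProjectiveResolution X) (Y : ModuleCat.{u} R) (n : ℕ) :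
    P.cocycles Y n →ₗ[R] Abelian.Ext X Y n where
  toFun z := P.extMk z.1 (n + 1) rfl z.2
  map_add' z w := (P.add_extMk z.1 w.1 (n + 1) rfl z.2 w.2).symm
  map_smul' r z := (P.smul_extMk r z.1 (n + 1) rfl z.2).symm

lemma cocyclesToExt_surjective (P : ProjectiveResolution X) (Y : ModuleCat.{u} R) (n : ℕ) :
    Function.Surjective (P.cocyclesToExt Y n) := fun α => by
  obtain ⟨f, hf, h⟩ := P.extMk_surjective α (n + 1) rfl
  exact ⟨⟨f, hf⟩, h⟩

/-- The identification of cycles of the complex `Hom(P, Y)` with cocycles. -/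
noncomputable def cyclesToCocycles (P : ProjectiveResolution X) (Y : ModuleCat.{u} R) (n : ℕ) :
    (P.complex.linearYonedaObj R Y).cycles n →ₗ[R] P.cocycles Y n :=
  LinearMap.codRestrict (P.cocycles Y n) ((P.complex.linearYonedaObj R Y).iCycles n).hom
    fun z => (P.mem_cocycles Y n _).2
      (ConcreteCategory.congr_hom ((P.complex.linearYonedaObj R Y).iCycles_d n (n + 1)) z)

lemma cyclesToCocycles_surjective (P : ProjectiveResolution X) (Y : ModuleCat.{u} R) (n : ℕ) :
    Function.Surjective (P.cyclesToCocycles Y n) := by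
  rintro ⟨f, hf⟩
  exact ⟨(P.complex.linearYonedaObj R Y).cyclesMk f (n + 1) (by simp) hf,
    Subtype.ext ((P.complex.linearYonedaObj R Y).i_cyclesMk f (n + 1) (by simp) hf)⟩

lemma homologyπ_surjective (P : ProjectiveResolution X) (Y : ModuleCat.{u} R) (n : ℕ) :
    Function.Surjective ((P.complex.linearYonedaObj R Y).homologyπ n).hom :=
  (ModuleCat.epi_iff_surjective _).1 inferInstance

lemma ker_cyclesToExt (P : ProjectiveResolution X) (Y : ModuleCat.{u} R) (n : ℕ) :
    LinearMap.ker ((P.complex.linearYonedaObj R Y).homologyπ n).hom =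
      LinearMap.ker (P.cocyclesToExt Y n ∘ₗ P.cyclesToCocycles Y n) := by
  set K := P.complex.linearYonedaObj R Y with hK
  have hex : Function.Exact (K.toCycles ((ComplexShape.up ℕ).prev n) n).hom (K.homologyπ n).hom :=
    (ShortComplex.ShortExact.moduleCat_exact_iff_function_exact _).1
      (ShortComplex.exact_of_g_is_cokernel
        (ShortComplex.mk (K.toCycles ((ComplexShape.up ℕ).prev n) n) (K.homologyπ n) (by simp))
        (K.homologyIsCokernel _ n rfl))
  have hinj : Function.Injective (K.iCycles n).hom := (ModuleCat.mono_iff_injective _).1 inferInstance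
  ext z
  simp only [LinearMap.mem_ker, LinearMap.comp_apply]
  rw [hex z]
  have htc (w) : (K.iCycles n).hom ((K.toCycles ((ComplexShape.up ℕ).prev n) n).hom w) =
      (K.d ((ComplexShape.up ℕ).prev n) n).hom w :=
    ConcreteCategory.congr_hom (K.toCycles_i ((ComplexShape.up ℕ).prev n) n) w
  have key : z ∈ Set.range (K.toCycles ((ComplexShape.up ℕ).prev n) n).hom ↔
      ∃ w, (K.d ((ComplexShape.up ℕ).prev n) n).hom w = (K.iCycles n).hom z :=
    ⟨fun ⟨w, hw⟩ => ⟨w, by rw [← htc, hw]⟩, fun ⟨w, hw⟩ => ⟨w, hinj ((htc w).trans hw)⟩⟩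
  rw [key]
  cases n with
  | zero =>
    refine Iff.trans ?_ (P.extMk_zero_eq_zero_iff ((K.iCycles 0).hom z) 1 rfl
      (P.cyclesToCocycles Y 0 z).2).symm
    rw [K.shape _ _ (by simp)]
    exact ⟨fun ⟨w, hw⟩ => hw.symm, fun h => ⟨0, h.symm⟩⟩
  | succ n =>
    refine Iff.trans ?_ (P.extMk_eq_zero_iff ((K.iCycles (n + 1)).hom z) (n + 2) rfl
      (P.cyclesToCocycles Y (n + 1) z).2 n rfl).symm
    rw [show (ComplexShape.up ℕ).prev (n + 1) = n by simp]
    exact Iff.rfl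

end CategoryTheory.ProjectiveResolution

namespace CategoryTheory.ProjectiveResolution

open Limits

variable {R : Type u} [CommRing R] {X X' : ModuleCat.{u} R}

/-- The cohomology of `Hom(P, Y)` is `Ext`. -/
noncomputable def homologyEquivExt (P : ProjectiveResolution X) (Y : ModuleCat.{u} R) (n : ℕ) :
    (P.complex.linearYonedaObj R Y).homology n ≃ₗ[R] Abelian.Ext X Y n :=
  (LinearMap.quotKerEquivOfSurjective _ (P.homologyπ_surjective Y n)).symm ≪≫ₗ
    Submodule.quotEquivOfEq _ _ (P.ker_cyclesToExt Y n) ≪≫ₗ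
    LinearMap.quotKerEquivOfSurjective (P.cocyclesToExt Y n ∘ₗ P.cyclesToCocycles Y n)
      ((P.cocyclesToExt_surjective Y n).comp (P.cyclesToCocycles_surjective Y n))

lemma homologyEquivExt_homologyπ (P : ProjectiveResolution X) (Y : ModuleCat.{u} R) (n : ℕ)
    (z : (P.complex.linearYonedaObj R Y).cycles n) :
    P.homologyEquivExt Y n (((P.complex.linearYonedaObj R Y).homologyπ n).hom z) =
      P.cocyclesToExt Y n (P.cyclesToCocycles Y n z) := by
  have : (LinearMap.quotKerEquivOfSurjective _ (P.homologyπ_surjective Y n)).symm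
      (((P.complex.linearYonedaObj R Y).homologyπ n).hom z) = Submodule.Quotient.mk z := by
    rw [LinearEquiv.symm_apply_eq]
    rfl
  simp only [homologyEquivExt, LinearEquiv.trans_apply, this]
  rfl

/-- The map `Hom(P, Y) ⟶ Hom(P', Y)` induced by a chain map `P' ⟶ P`. -/
noncomputable def linearYonedaMap {P : ProjectiveResolution X} {P' : ProjectiveResolution X'}
    (φ : P'.complex ⟶ P.complex) (Y : ModuleCat.{u} R) :
    P.complex.linearYonedaObj R Y ⟶ P'.complex.linearYonedaObj R Y :=
  (HomologicalComplex.unopFunctor _ _).map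
    ((((linearYoneda R (ModuleCat.{u} R)).obj Y).rightOp.mapHomologicalComplex _).map φ).op

lemma comp_square {C : Type*} [Category* C] {A A' B B' D D' : C} {a : A ⟶ A'} {b : B ⟶ B'}
    {d : D ⟶ D'} {p : A ⟶ B} {p' : A' ⟶ B'} {q : B ⟶ D} {q' : B' ⟶ D'}
    (h : a ≫ p' = p ≫ b) (h' : b ≫ q' = q ≫ d) : a ≫ p' ≫ q' = (p ≫ q) ≫ d := by
  rw [reassoc_of% h, h', Category.assoc]

lemma inv_square {C : Type*} [Category* C] {A A' B B' : C} {a : A ⟶ A'} {d : B ⟶ B'}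
    {b : A' ≅ B'} {c : A ≅ B} (h : a ≫ b.hom = c.hom ≫ d) : c.inv ≫ a = d ≫ b.inv := by
  rw [Iso.inv_comp_eq, ← reassoc_of% h, Iso.hom_inv_id, Category.comp_id]

lemma isoExt_hom_naturality {P : ProjectiveResolution X} {P' : ProjectiveResolution X'}
    {f : X' ⟶ X} (φ : Hom P' P f) (Y : ModuleCat.{u} R) (n : ℕ) :
    ((Ext R (ModuleCat.{u} R) n).map f.op).app Y ≫ (P'.isoExt n Y).hom =
      (P.isoExt n Y).hom ≫ HomologicalComplex.homologyMap (linearYonedaMap φ.hom Y) n := by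
  have h2 := congrArg Quiver.Hom.unop (ProjectiveResolution.isoLeftDerivedObj_inv_naturality f P' P
    φ.hom φ.hom_f_zero_comp_π_f_zero ((linearYoneda R (ModuleCat.{u} R)).obj Y).rightOp n)
  have h3 := congrArg Quiver.Hom.unop (inv_square
      (HomologicalComplex.homologyOp_hom_naturality (linearYonedaMap φ.hom Y) n))
  exact comp_square h2 h3

lemma cyclesToCocycles_naturality {P : ProjectiveResolution X} {P' : ProjectiveResolution X'}
    (φ : P'.complex ⟶ P.complex) (Y : ModuleCat.{u} R) (n : ℕ)
    (z : (P.complex.linearYonedaObj R Y).cycles n) :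
    (P'.cyclesToCocycles Y n
      ((HomologicalComplex.cyclesMap (linearYonedaMap φ Y) n).hom z)).1 =
      φ.f n ≫ (P.cyclesToCocycles Y n z).1 :=
  ConcreteCategory.congr_hom (HomologicalComplex.cyclesMap_i (linearYonedaMap φ Y) n) z

lemma cocyclesToExt_naturality {P : ProjectiveResolution X} {P' : ProjectiveResolution X'}
    {f : X' ⟶ X} (φ : Hom P' P f) (Y : ModuleCat.{u} R) (n : ℕ)
    (z : P.cocycles Y n) (w : P'.cocycles Y n) (h : w.1 = φ.hom.f n ≫ z.1) :
    P'.cocyclesToExt Y n w = (Abelian.Ext.mk₀ f).comp (P.cocyclesToExt Y n z) (zero_add n) := by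
  obtain ⟨w, hw⟩ := w
  obtain rfl : w = _ := h
  exact (mk₀_comp_extMk z.1 (n + 1) rfl z.2 φ).symm

lemma homologyEquivExt_naturality {P : ProjectiveResolution X} {P' : ProjectiveResolution X'}
    {f : X' ⟶ X} (φ : Hom P' P f) (Y : ModuleCat.{u} R) (n : ℕ)
    (x : (P.complex.linearYonedaObj R Y).homology n) :
    P'.homologyEquivExt Y n ((HomologicalComplex.homologyMap (linearYonedaMap φ.hom Y) n).hom x) =
      (Abelian.Ext.mk₀ f).comp (P.homologyEquivExt Y n x) (zero_add n) := by
  obtain ⟨z, rfl⟩ := P.homologyπ_surjective Y n x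
  have h := ConcreteCategory.congr_hom
    (HomologicalComplex.homologyπ_naturality (linearYonedaMap φ.hom Y) n) z
  exact (congrArg _ h).trans ((P'.homologyEquivExt_homologyπ Y n _).trans
    ((cocyclesToExt_naturality φ Y n _ _ (cyclesToCocycles_naturality φ.hom Y n z)).trans
      (congrArg (fun y => (Abelian.Ext.mk₀ f).comp y (zero_add n))
        (P.homologyEquivExt_homologyπ Y n z).symm)))

end CategoryTheory.ProjectiveResolution

section

open ProjectiveResolution

variable {R : Type u} [CommRing R]

/-- The derived functor `Ext` of modules is isomorphic to the `Ext` of abelian categories. -/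
noncomputable def extEquiv (N M : ModuleCat.{u} R) (i : ℕ) : extObj N M i ≃ₗ[R] Abelian.Ext N M i :=
  ((projectiveResolution N).isoExt i M).toLinearEquiv ≪≫ₗ
    (projectiveResolution N).homologyEquivExt M i

lemma extEquiv_naturality {N N' : ModuleCat.{u} R} (f : N' ⟶ N) (M : ModuleCat.{u} R) (i : ℕ)
    (x : extObj N M i) :
    extEquiv N' M i ((((Ext R (ModuleCat.{u} R) i).map f.op).app M).hom x) =
      (Abelian.Ext.mk₀ f).comp (extEquiv N M i x) (zero_add i) := by
  let φ : Hom (projectiveResolution N') (projectiveResolution N) f :=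
    { hom := ProjectiveResolution.lift f _ _
      hom_f_zero_comp_π_f_zero := ProjectiveResolution.lift_commutes_zero f _ _ }
  exact (congrArg ((projectiveResolution N').homologyEquivExt M i)
    (ConcreteCategory.congr_hom (isoExt_hom_naturality φ M i) x)).trans
      (homologyEquivExt_naturality φ M i _)

end

section

open Limits

variable {R : Type u} [CommRing R]

/-- The projection `R/𝔞^n → R/𝔞^m` for `m ≤ n`. -/
noncomputable def quotPowMap (𝔞 : Ideal R) {m n : ℕ} (h : m ≤ n) :
    ModuleCat.of R (R ⧸ 𝔞 ^ n) ⟶ ModuleCat.of R (R ⧸ 𝔞 ^ m) :=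
  ModuleCat.ofHom (Submodule.mapQ _ _ LinearMap.id (Ideal.pow_le_pow_right h))

lemma quotPowMap_self (𝔞 : Ideal R) (n : ℕ) : quotPowMap 𝔞 (le_refl n) = 𝟙 _ := by
  ext; rfl

lemma quotPowMap_comp (𝔞 : Ideal R) {l m n : ℕ} (h : l ≤ m) (h' : m ≤ n) :
    quotPowMap 𝔞 h' ≫ quotPowMap 𝔞 h = quotPowMap 𝔞 (h.trans h') := by
  ext; rfl

/-- The transition map `Ext^i(R/𝔞^m, M) → Ext^i(R/𝔞^n, M)` for `m ≤ n`. -/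
noncomputable def extPowMap (𝔞 : Ideal R) (M : ModuleCat.{u} R) (i : ℕ) (m n : ℕ) (h : m ≤ n) :
    Abelian.Ext (ModuleCat.of R (R ⧸ 𝔞 ^ m)) M i →ₗ[R]
      Abelian.Ext (ModuleCat.of R (R ⧸ 𝔞 ^ n)) M i :=
  (Abelian.Ext.mk₀ (quotPowMap 𝔞 h)).precompOfLinear R M (zero_add i)

lemma extPowMap_apply (𝔞 : Ideal R) (M : ModuleCat.{u} R) (i : ℕ) {m n : ℕ} (h : m ≤ n)
    (x : Abelian.Ext (ModuleCat.of R (R ⧸ 𝔞 ^ m)) M i) :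
    extPowMap 𝔞 M i m n h x = (Abelian.Ext.mk₀ (quotPowMap 𝔞 h)).comp x (zero_add i) :=
  rfl

lemma extPowMap_self (𝔞 : Ideal R) (M : ModuleCat.{u} R) (i n : ℕ) :
    extPowMap 𝔞 M i n n le_rfl = LinearMap.id := by
  ext x
  rw [extPowMap_apply, quotPowMap_self, Abelian.Ext.mk₀_id_comp, LinearMap.id_apply]

lemma extPowMap_comp (𝔞 : Ideal R) (M : ModuleCat.{u} R) (i : ℕ) {l m n : ℕ} (h : l ≤ m)
    (h' : m ≤ n) :
    extPowMap 𝔞 M i m n h' ∘ₗ extPowMap 𝔞 M i l m h = extPowMap 𝔞 M i l n (h.trans h') := by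
  ext x
  simp only [extPowMap_apply, LinearMap.comp_apply]
  rw [Abelian.Ext.mk₀_comp_mk₀_assoc, quotPowMap_comp]

instance (𝔞 : Ideal R) (M : ModuleCat.{u} R) (i : ℕ) :
    DirectedSystem (fun n : ℕ => Abelian.Ext (ModuleCat.of R (R ⧸ 𝔞 ^ n)) M i)
      (extPowMap 𝔞 M i · · ·) where
  map_self n x := LinearMap.congr_fun (extPowMap_self 𝔞 M i n) x
  map_map _ _ _ h h' x := LinearMap.congr_fun (extPowMap_comp 𝔞 M i h h') x

/-- Local cohomology as a direct limit of `Ext` modules. -/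
def ExtLimit (𝔞 : Ideal R) (i : ℕ) (M : ModuleCat.{u} R) : Type u :=
  Module.DirectLimit (fun n : ℕ => Abelian.Ext (ModuleCat.of R (R ⧸ 𝔞 ^ n)) M i)
    (extPowMap 𝔞 M i)

namespace ExtLimit

variable (𝔞 : Ideal R) (i : ℕ) (M : ModuleCat.{u} R)

noncomputable instance : AddCommGroup (ExtLimit 𝔞 i M) :=
  inferInstanceAs (AddCommGroup (Module.DirectLimit _ (extPowMap 𝔞 M i)))

noncomputable instance : Module R (ExtLimit 𝔞 i M) :=
  inferInstanceAs (Module R (Module.DirectLimit _ (extPowMap 𝔞 M i)))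

/-- The structure map `Ext^i(R/𝔞^n, M) → H^i_𝔞(M)`. -/
noncomputable def of (n : ℕ) : Abelian.Ext (ModuleCat.of R (R ⧸ 𝔞 ^ n)) M i →ₗ[R] ExtLimit 𝔞 i M :=
  Module.DirectLimit.of R ℕ _ (extPowMap 𝔞 M i) n

lemma of_extPowMap {m n : ℕ} (h : m ≤ n) (x : Abelian.Ext (ModuleCat.of R (R ⧸ 𝔞 ^ m)) M i) :
    of 𝔞 i M n (extPowMap 𝔞 M i m n h x) = of 𝔞 i M m x :=
  Module.DirectLimit.of_f

variable {𝔞 i M}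

lemma exists_of (x : ExtLimit 𝔞 i M) : ∃ n y, of 𝔞 i M n y = x :=
  Module.DirectLimit.exists_of x

lemma of_eq_zero {n : ℕ} {x : Abelian.Ext (ModuleCat.of R (R ⧸ 𝔞 ^ n)) M i}
    (hx : of 𝔞 i M n x = 0) : ∃ m, ∃ h : n ≤ m, extPowMap 𝔞 M i n m h x = 0 :=
  Module.DirectLimit.of.zero_exact hx

variable {P : Type*} [AddCommGroup P] [Module R P]

/-- The universal property of `ExtLimit`. -/
noncomputable def lift (g : ∀ n, Abelian.Ext (ModuleCat.of R (R ⧸ 𝔞 ^ n)) M i →ₗ[R] P)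
    (hg : ∀ m n (h : m ≤ n) x, g n (extPowMap 𝔞 M i m n h x) = g m x) :
    ExtLimit 𝔞 i M →ₗ[R] P :=
  Module.DirectLimit.lift R ℕ _ (extPowMap 𝔞 M i) g hg

lemma lift_of (g : ∀ n, Abelian.Ext (ModuleCat.of R (R ⧸ 𝔞 ^ n)) M i →ₗ[R] P)
    (hg : ∀ m n (h : m ≤ n) x, g n (extPowMap 𝔞 M i m n h x) = g m x) (n : ℕ)
    (x : Abelian.Ext (ModuleCat.of R (R ⧸ 𝔞 ^ n)) M i) :
    lift g hg (of 𝔞 i M n x) = g n x :=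
  Module.DirectLimit.lift_of _ _ _

lemma hom_ext {f g : ExtLimit 𝔞 i M →ₗ[R] P} (h : ∀ n, f ∘ₗ of 𝔞 i M n = g ∘ₗ of 𝔞 i M n) :
    f = g := by
  ext x
  obtain ⟨n, y, rfl⟩ := exists_of x
  exact LinearMap.congr_fun (h n) y

end ExtLimit

/-- The sequence of modules `Ext^i(R/𝔞^n, M)`. -/
noncomputable def extPowDiagram (𝔞 : Ideal R) (i : ℕ) (M : ModuleCat.{u} R) :
    ℕ ⥤ ModuleCat.{u} R where
  obj n := ModuleCat.of R (Abelian.Ext (ModuleCat.of R (R ⧸ 𝔞 ^ n)) M i)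
  map f := ModuleCat.ofHom (extPowMap 𝔞 M i _ _ f.le)
  map_id n := congrArg ModuleCat.ofHom (extPowMap_self 𝔞 M i n)
  map_comp f g := congrArg ModuleCat.ofHom (extPowMap_comp 𝔞 M i f.le g.le).symm

/-- The cocone on `extPowDiagram` given by the direct limit. -/
noncomputable def extPowCocone (𝔞 : Ideal R) (i : ℕ) (M : ModuleCat.{u} R) :
    Cocone (extPowDiagram 𝔞 i M) where
  pt := ModuleCat.of R (ExtLimit 𝔞 i M)
  ι :=
    { app := fun n => ModuleCat.ofHom (ExtLimit.of 𝔞 i M n)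
      naturality := fun m n f => by
        ext x
        exact ExtLimit.of_extPowMap 𝔞 i M f.le x }

/-- The components of a cocone on `extPowDiagram`. -/
noncomputable def extPowLeg {𝔞 : Ideal R} {i : ℕ} {M : ModuleCat.{u} R}
    (s : Cocone (extPowDiagram 𝔞 i M)) (n : ℕ) :
    Abelian.Ext (ModuleCat.of R (R ⧸ 𝔞 ^ n)) M i →ₗ[R] s.pt :=
  (s.ι.app n).hom

lemma extPowLeg_comp {𝔞 : Ideal R} {i : ℕ} {M : ModuleCat.{u} R}
    (s : Cocone (extPowDiagram 𝔞 i M)) {m n : ℕ} (h : m ≤ n) :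
    extPowLeg s n ∘ₗ extPowMap 𝔞 M i m n h = extPowLeg s m :=
  congrArg ModuleCat.Hom.hom (s.w (homOfLE h))

/-- The map out of `ExtLimit` associated to a cocone. -/
noncomputable def extPowDesc {𝔞 : Ideal R} {i : ℕ} {M : ModuleCat.{u} R}
    (s : Cocone (extPowDiagram 𝔞 i M)) : ExtLimit 𝔞 i M →ₗ[R] s.pt :=
  ExtLimit.lift (extPowLeg s) fun _ _ h => LinearMap.congr_fun (extPowLeg_comp s h)

lemma extPowDesc_comp_of {𝔞 : Ideal R} {i : ℕ} {M : ModuleCat.{u} R}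
    (s : Cocone (extPowDiagram 𝔞 i M)) (n : ℕ) :
    extPowDesc s ∘ₗ ExtLimit.of 𝔞 i M n = extPowLeg s n :=
  LinearMap.ext fun x => ExtLimit.lift_of (extPowLeg s)
    (fun _ _ h => LinearMap.congr_fun (extPowLeg_comp s h)) n x

/-- The direct limit is a colimit of `extPowDiagram`. -/
noncomputable def extPowCoconeIsColimit (𝔞 : Ideal R) (i : ℕ) (M : ModuleCat.{u} R) :
    IsColimit (extPowCocone 𝔞 i M) where
  desc s := ModuleCat.ofHom (extPowDesc s)
  fac s n := ModuleCat.hom_ext (extPowDesc_comp_of s n)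
  uniq s m h := ModuleCat.hom_ext <| ExtLimit.hom_ext fun n => by
    have h1 : m.hom ∘ₗ ExtLimit.of 𝔞 i M n = extPowLeg s n := congrArg ModuleCat.Hom.hom (h n)
    exact h1.trans (extPowDesc_comp_of s n).symm

/-- The diagram defining local cohomology in terms of Yoneda `Ext`. -/
noncomputable def localCohomologyDiagramIso (𝔞 : Ideal R) (i : ℕ) (M : ModuleCat.{u} R) :
    opOp ℕ ⋙ localCohomology.diagram (localCohomology.idealPowersDiagram 𝔞) i ⋙
      (evaluation _ _).obj M ≅ extPowDiagram 𝔞 i M :=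
  NatIso.ofComponents (fun n => (extEquiv (ModuleCat.of R (R ⧸ 𝔞 ^ n)) M i).toModuleIso)
    fun {m n} f => by
      ext x
      exact extEquiv_naturality (quotPowMap 𝔞 f.le) M i x

/-- Local cohomology is the direct limit of the modules `Ext^i(R/𝔞^n, M)`. -/
noncomputable def localCohomologyEquiv (𝔞 : Ideal R) (i : ℕ) (M : ModuleCat.{u} R) :
    (localCohomology 𝔞 i).obj M ≃ₗ[R] ExtLimit 𝔞 i M :=
  have := localCohomology.hasColimitDiagram (localCohomology.idealPowersDiagram 𝔞) i
  Iso.toLinearEquiv <|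
    colimitObjIsoColimitCompEvaluation
      (localCohomology.diagram (localCohomology.idealPowersDiagram 𝔞) i) M ≪≫
    (Functor.Final.colimitIso (opOp ℕ) _).symm ≪≫
    HasColimit.isoOfNatIso (localCohomologyDiagramIso 𝔞 i M) ≪≫
    (colimit.isColimit _).coconePointUniqueUpToIso (extPowCoconeIsColimit 𝔞 i M)

end

section

open Abelian

variable {R : Type u} [CommRing R]

lemma CategoryTheory.ShortComplex.ShortExact.exact_postcomp_f_g {S : ShortComplex (ModuleCat.{u} R)}
    (hS : S.ShortExact) (X : ModuleCat.{u} R) (i : ℕ) :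
    Function.Exact ((Ext.mk₀ S.f).postcompOfLinear R X (add_zero i))
      ((Ext.mk₀ S.g).postcompOfLinear R X (add_zero i)) := fun x =>
  ⟨fun h => Ext.covariant_sequence_exact₂ X hS x h, by
    rintro ⟨y, rfl⟩
    simp⟩

lemma CategoryTheory.ShortComplex.ShortExact.exact_postcomp_g_extClass
    {S : ShortComplex (ModuleCat.{u} R)} (hS : S.ShortExact) (X : ModuleCat.{u} R) (i : ℕ) :
    Function.Exact ((Ext.mk₀ S.g).postcompOfLinear R X (add_zero i))
      (hS.extClass.postcompOfLinear R X (rfl : i + 1 = i + 1)) := fun x =>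
  ⟨fun h => Ext.covariant_sequence_exact₃ X hS x rfl h, by
    rintro ⟨y, rfl⟩
    simp⟩

lemma CategoryTheory.ShortComplex.ShortExact.exact_postcomp_extClass_f
    {S : ShortComplex (ModuleCat.{u} R)} (hS : S.ShortExact) (X : ModuleCat.{u} R) (i : ℕ) :
    Function.Exact (hS.extClass.postcompOfLinear R X (rfl : i + 1 = i + 1))
      ((Ext.mk₀ S.f).postcompOfLinear R X (add_zero (i + 1))) := fun x =>
  ⟨fun h => Ext.covariant_sequence_exact₁ X hS x h rfl, by
    rintro ⟨y, rfl⟩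
    simp⟩

namespace ExtLimit

variable (𝔞 : Ideal R) {M N P : ModuleCat.{u} R} {i j k a b : ℕ}

lemma extPowMap_postcomp (α : Ext M N a) (h : i + a = j) {m n : ℕ} (hmn : m ≤ n)
    (x : Ext (ModuleCat.of R (R ⧸ 𝔞 ^ m)) M i) :
    extPowMap 𝔞 N j m n hmn (α.postcompOfLinear R _ h x) =
      α.postcompOfLinear R _ h (extPowMap 𝔞 M i m n hmn x) :=
  (Ext.comp_assoc _ _ _ (zero_add i) h (by lia)).symm

/-- The map on local cohomology given by postcomposition with an `Ext` class. -/
noncomputable def postcomp (α : Ext M N a) (h : i + a = j) : ExtLimit 𝔞 i M →ₗ[R] ExtLimit 𝔞 j N :=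
  lift (fun n => of 𝔞 j N n ∘ₗ α.postcompOfLinear R _ h) fun m n hmn x => by
    rw [LinearMap.comp_apply, ← extPowMap_postcomp, of_extPowMap, LinearMap.comp_apply]

lemma postcomp_of (α : Ext M N a) (h : i + a = j) (n : ℕ)
    (x : Ext (ModuleCat.of R (R ⧸ 𝔞 ^ n)) M i) :
    postcomp 𝔞 α h (of 𝔞 i M n x) = of 𝔞 j N n (α.postcompOfLinear R _ h x) :=
  lift_of (fun n => of 𝔞 j N n ∘ₗ α.postcompOfLinear R _ h) (fun m n hmn x => by
    rw [LinearMap.comp_apply, ← extPowMap_postcomp, of_extPowMap, LinearMap.comp_apply]) n x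

lemma postcomp_exact (α : Ext M N a) (h : i + a = j) (β : Ext N P b) (h' : j + b = k)
    (hex : ∀ X : ModuleCat.{u} R, Function.Exact (α.postcompOfLinear R X h)
      (β.postcompOfLinear R X h')) :
    Function.Exact (postcomp 𝔞 α h) (postcomp 𝔞 β h') := by
  intro x
  constructor
  · intro hx
    obtain ⟨n, y, rfl⟩ := exists_of x
    rw [postcomp_of] at hx
    obtain ⟨m, hnm, hy⟩ := of_eq_zero hx
    rw [extPowMap_postcomp] at hy
    obtain ⟨z, hz⟩ := (hex _ _).1 hy
    exact ⟨of 𝔞 i M m z, by rw [postcomp_of, hz, of_extPowMap]⟩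
  · rintro ⟨y, rfl⟩
    obtain ⟨n, y, rfl⟩ := exists_of y
    rw [postcomp_of, postcomp_of, (hex _).apply_apply_eq_zero, map_zero]

lemma postcomp_injective (f : M ⟶ N) [Mono f] :
    Function.Injective (postcomp 𝔞 (Ext.mk₀ f) (add_zero 0)) := by
  refine (injective_iff_map_eq_zero _).2 fun x hx => ?_
  obtain ⟨n, y, rfl⟩ := exists_of x
  rw [postcomp_of] at hx
  obtain ⟨m, hnm, hy⟩ := of_eq_zero hx
  rw [extPowMap_postcomp] at hy
  rw [← of_extPowMap 𝔞 0 M hnm, Ext.postcomp_mk₀_injective_of_mono _ f (hy.trans (map_zero _).symm),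
    map_zero]

lemma subsingleton_of_injective (I : ModuleCat.{u} R) [Injective I] (i : ℕ) :
    Subsingleton (ExtLimit 𝔞 (i + 1) I) := by
  refine subsingleton_of_forall_eq 0 fun x => ?_
  obtain ⟨n, y, rfl⟩ := exists_of x
  rw [y.eq_zero_of_injective, map_zero]

lemma smul_eq_zero_of_mem {J : Ideal R} (x : Ext (ModuleCat.of R (R ⧸ J)) M i) {r : R}
    (hr : r ∈ J) : r • x = 0 := by
  have h : r • 𝟙 (ModuleCat.of R (R ⧸ J)) = 0 := by
    ext
    change r • (1 : R ⧸ J) = 0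
    rw [Algebra.smul_def, mul_one]
    exact Ideal.Quotient.eq_zero_iff_mem.2 hr
  rw [← Ext.mk₀_id_comp x, ← Ext.smul_comp, ← Ext.mk₀_smul, h, Ext.mk₀_zero, Ext.zero_comp]

lemma isTorsionIdeal (i : ℕ) (M : ModuleCat.{u} R) : IsTorsionIdeal 𝔞 (ExtLimit 𝔞 i M) := by
  intro x
  obtain ⟨n, y, rfl⟩ := exists_of x
  exact ⟨n, fun a ha => by rw [← map_smul, smul_eq_zero_of_mem y ha, map_zero]⟩

end ExtLimit

end

section

open Abelian

variable {R : Type u} [CommRing R]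

/-- Evaluation at `1` of an element of `Ext^0(R/J, M) = Hom(R/J, M)`. -/
noncomputable def extEvalOne (J : Ideal R) (M : ModuleCat.{u} R) :
    Ext (ModuleCat.of R (R ⧸ J)) M 0 →ₗ[R] M :=
  LinearMap.applyₗ (1 : R ⧸ J) ∘ₗ
    (Ext.linearEquiv₀.trans ModuleCat.homLinearEquiv).toLinearMap

lemma extEvalOne_mk₀ (J : Ideal R) {M : ModuleCat.{u} R} (f : ModuleCat.of R (R ⧸ J) ⟶ M) :
    extEvalOne J M (Ext.mk₀ f) = f.hom (1 : R ⧸ J) := by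
  have : Ext.linearEquiv₀ (R := R) (Ext.mk₀ f) = f := Ext.homEquiv₀.apply_symm_apply f
  change (Ext.linearEquiv₀ (R := R) (Ext.mk₀ f)).hom (1 : R ⧸ J) = _
  rw [this]

lemma extEvalOne_injective (J : Ideal R) (M : ModuleCat.{u} R) :
    Function.Injective (extEvalOne J M) := by
  refine (injective_iff_map_eq_zero _).2 fun x hx => ?_
  obtain ⟨f, rfl⟩ := (Ext.mk₀_bijective _ _).2 x
  rw [extEvalOne_mk₀] at hx
  have : f = 0 := by
    refine ModuleCat.hom_ext (LinearMap.ext fun (y : R ⧸ J) => ?_)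
    obtain ⟨r, rfl⟩ := Ideal.Quotient.mk_surjective y
    have : (Ideal.Quotient.mk J r : R ⧸ J) = r • (1 : R ⧸ J) := by
      rw [Algebra.smul_def, mul_one]; rfl
    rw [this, map_smul, hx, smul_zero]
    rfl
  rw [this, Ext.mk₀_zero]

lemma exists_extEvalOne_eq {J : Ideal R} {M : ModuleCat.{u} R} {m : M}
    (h : ∀ a ∈ J, a • m = 0) : ∃ x, extEvalOne J M x = m := by
  refine ⟨Ext.mk₀ (ModuleCat.ofHom (Submodule.liftQ J (LinearMap.toSpanSingleton R M m)
    fun a ha => h a ha)), ?_⟩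
  rw [extEvalOne_mk₀]
  exact one_smul R m

lemma extEvalOne_comp_mk₀ (J : Ideal R) {M N : ModuleCat.{u} R} (f : M ⟶ N)
    (x : Ext (ModuleCat.of R (R ⧸ J)) M 0) :
    extEvalOne J N ((Ext.mk₀ f).postcompOfLinear R _ (add_zero 0) x) =
      f.hom (extEvalOne J M x) := by
  obtain ⟨g, rfl⟩ := (Ext.mk₀_bijective _ _).2 x
  have : (Ext.mk₀ f).postcompOfLinear R _ (add_zero 0) (Ext.mk₀ g) = Ext.mk₀ (g ≫ f) :=
    Ext.mk₀_comp_mk₀ _ _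
  rw [this, extEvalOne_mk₀, extEvalOne_mk₀]
  rfl

lemma extEvalOne_extPowMap (𝔞 : Ideal R) (M : ModuleCat.{u} R) {m n : ℕ} (h : m ≤ n)
    (x : Ext (ModuleCat.of R (R ⧸ 𝔞 ^ m)) M 0) :
    extEvalOne (𝔞 ^ n) M (extPowMap 𝔞 M 0 m n h x) = extEvalOne (𝔞 ^ m) M x := by
  obtain ⟨g, rfl⟩ := (Ext.mk₀_bijective _ _).2 x
  have : extPowMap 𝔞 M 0 m n h (Ext.mk₀ g) = Ext.mk₀ (quotPowMap 𝔞 h ≫ g) :=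
    Ext.mk₀_comp_mk₀ _ _
  rw [this, extEvalOne_mk₀, extEvalOne_mk₀]
  rfl

namespace ExtLimit

variable (𝔞 : Ideal R)

/-- The inclusion of `H^0_𝔞(M)` in `M`. -/
noncomputable def eval (M : ModuleCat.{u} R) : ExtLimit 𝔞 0 M →ₗ[R] M :=
  lift (fun n => extEvalOne (𝔞 ^ n) M) fun _ _ h x => extEvalOne_extPowMap 𝔞 M h x

lemma eval_of (M : ModuleCat.{u} R) (n : ℕ) (x : Ext (ModuleCat.of R (R ⧸ 𝔞 ^ n)) M 0) :
    eval 𝔞 M (of 𝔞 0 M n x) = extEvalOne (𝔞 ^ n) M x :=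
  lift_of (fun n => extEvalOne (𝔞 ^ n) M) (fun _ _ h x => extEvalOne_extPowMap 𝔞 M h x) n x

lemma eval_injective (M : ModuleCat.{u} R) : Function.Injective (eval 𝔞 M) := by
  refine (injective_iff_map_eq_zero _).2 fun x hx => ?_
  obtain ⟨n, y, rfl⟩ := exists_of x
  rw [eval_of] at hx
  rw [extEvalOne_injective _ _ (hx.trans (map_zero _).symm), map_zero]

variable {𝔞} in
lemma exists_eval_eq {M : ModuleCat.{u} R} {m : M} {n : ℕ} (h : ∀ a ∈ 𝔞 ^ n, a • m = 0) :
    ∃ x, eval 𝔞 M x = m := by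
  obtain ⟨x, hx⟩ := exists_extEvalOne_eq h
  exact ⟨of 𝔞 0 M n x, by rw [eval_of, hx]⟩

variable {𝔞} in
lemma eval_surjective {M : ModuleCat.{u} R} (h : IsTorsionIdeal 𝔞 M) :
    Function.Surjective (eval 𝔞 M) := fun m =>
  let ⟨_, hn⟩ := h m
  exists_eval_eq hn

lemma eval_postcomp {M N : ModuleCat.{u} R} (f : M ⟶ N) (x : ExtLimit 𝔞 0 M) :
    eval 𝔞 N (postcomp 𝔞 (Ext.mk₀ f) (add_zero 0) x) = f.hom (eval 𝔞 M x) := by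
  obtain ⟨n, y, rfl⟩ := exists_of x
  rw [postcomp_of, eval_of, eval_of, extEvalOne_comp_mk₀]

lemma injective_extLimit_zero [IsNoetherianRing R] (I : ModuleCat.{u} R) [Injective I] :
    Module.Injective R (ExtLimit 𝔞 0 I) := by
  refine Module.Baer.injective fun J g => ?_
  have hI : Module.Injective R I := Module.injective_module_of_injective_object R I
  obtain ⟨N, hN⟩ : ∃ N, ∀ a ∈ 𝔞 ^ N, ∀ x, a • g x = 0 := by
    obtain ⟨s, hs⟩ : (⊤ : Submodule R J).FG := Module.Finite.fg_top
    choose n hn using isTorsionIdeal 𝔞 0 I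
    refine ⟨s.sup (fun x => n (g x)), fun a ha x => ?_⟩
    have : x ∈ Submodule.span R (s : Set J) := hs ▸ Submodule.mem_top
    induction this using Submodule.span_induction with
    | mem x hx =>
      exact hn _ _ (Ideal.pow_le_pow_right (Finset.le_sup (f := fun x => n (g x)) hx) ha)
    | zero => rw [map_zero, smul_zero]
    | add x y _ _ hx hy => rw [map_add, smul_add, hx, hy, add_zero]
    | smul r x _ hx => rw [map_smul, smul_comm, hx, smul_zero]
  obtain ⟨k, hk⟩ := Ideal.exists_pow_inf_eq_pow_smul 𝔞 J
  have hker : ∀ x : J, (x : R) ∈ 𝔞 ^ (N + k) → g x = 0 := by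
    intro x hx
    have h1 : (x : R) ∈ 𝔞 ^ N • J := by
      have h2 : (x : R) ∈ 𝔞 ^ (N + k) • (⊤ : Submodule R R) ⊓ J := ⟨by simpa using hx, x.2⟩
      rw [hk (N + k) (by lia), Nat.add_sub_cancel] at h2
      exact Submodule.smul_mono le_rfl inf_le_right h2
    have h3 : ∀ y ∈ 𝔞 ^ N • J, ∃ hy : y ∈ J, g ⟨y, hy⟩ = 0 := by
      intro y hy
      refine Submodule.smul_induction_on hy (fun a ha b hb => ?_) fun y z hy hz => ?_
      · exact ⟨J.smul_mem a hb, (map_smul g a ⟨b, hb⟩).trans (hN a ha _)⟩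
      · obtain ⟨hy, hy'⟩ := hy
        obtain ⟨hz, hz'⟩ := hz
        exact ⟨J.add_mem hy hz, (map_add g ⟨y, hy⟩ ⟨z, hz⟩).trans (by rw [hy', hz', add_zero])⟩
    exact (h3 x h1).2
  let ι : (J ⧸ Submodule.comap J.subtype (𝔞 ^ (N + k))) →ₗ[R] R ⧸ 𝔞 ^ (N + k) :=
    Submodule.mapQ _ _ J.subtype le_rfl
  have hι : Function.Injective ι := by
    rw [← LinearMap.ker_eq_bot, Submodule.ker_mapQ]
    exact Submodule.mkQ_map_self _
  let g' : (J ⧸ Submodule.comap J.subtype (𝔞 ^ (N + k))) →ₗ[R] I :=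
    Submodule.liftQ _ (eval 𝔞 I ∘ₗ g) fun x hx => by
      rw [LinearMap.mem_ker, LinearMap.comp_apply, hker x hx, map_zero]
  obtain ⟨ψ, hψ⟩ := hI.out ι hι g'
  refine ⟨LinearMap.toSpanSingleton R _ (of 𝔞 0 I (N + k) (Ext.mk₀ (ModuleCat.ofHom ψ))),
    fun x hx => eval_injective 𝔞 I ?_⟩
  rw [LinearMap.toSpanSingleton_apply, map_smul, eval_of, extEvalOne_mk₀]
  have h1 := hψ (Submodule.Quotient.mk ⟨x, hx⟩)
  refine Eq.trans ?_ h1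
  change x • ψ 1 = ψ (Submodule.Quotient.mk x)
  rw [← map_smul]
  congr 1
  rw [Algebra.smul_def, mul_one]; rfl

end ExtLimit

end

section

open Abelian

variable {R : Type u} [CommRing R]

/-- The short complex `M → N → N / f(M)` attached to a linear map. -/
abbrev LinearMap.shortComplexCoker {M N : Type u} [AddCommGroup M] [Module R M] [AddCommGroup N]
    [Module R N] (f : M →ₗ[R] N) : ShortComplex (ModuleCat.{u} R) where
  f := ModuleCat.ofHom f
  g := ModuleCat.ofHom (LinearMap.range f).mkQ
  zero := by ext; simp

lemma LinearMap.shortExact_shortComplexCoker {M N : Type u} [AddCommGroup M] [Module R M]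
    [AddCommGroup N] [Module R N] {f : M →ₗ[R] N} (h : Function.Injective f) :
    f.shortComplexCoker.ShortExact where
  exact := (ShortComplex.ShortExact.moduleCat_exact_iff_function_exact _).mpr
    fun _ => by simp [shortComplexCoker]
  mono_f := (ModuleCat.mono_iff_injective _).mpr h
  epi_g := (ModuleCat.epi_iff_surjective _).mpr (Submodule.mkQ_surjective _)

lemma IsTorsionIdeal.of_surjective {𝔞 : Ideal R} {M N : Type u} [AddCommGroup M] [Module R M]
    [AddCommGroup N] [Module R N] (hM : IsTorsionIdeal 𝔞 M) (f : M →ₗ[R] N)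
    (hf : Function.Surjective f) : IsTorsionIdeal 𝔞 N := by
  intro y
  obtain ⟨x, rfl⟩ := hf y
  obtain ⟨n, hn⟩ := hM x
  exact ⟨n, fun a ha => by rw [← map_smul, hn a ha, map_zero]⟩

lemma IsTorsionIdeal.of_injective {𝔞 : Ideal R} {M N : Type u} [AddCommGroup M] [Module R M]
    [AddCommGroup N] [Module R N] (hN : IsTorsionIdeal 𝔞 N) (f : M →ₗ[R] N)
    (hf : Function.Injective f) : IsTorsionIdeal 𝔞 M := by
  intro x
  obtain ⟨n, hn⟩ := hN (f x)
  exact ⟨n, fun a ha => hf (by rw [map_smul, hn a ha, map_zero])⟩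

namespace ExtLimit

variable (𝔞 : Ideal R)

lemma postcomp_surjective {M N : ModuleCat.{u} R} (f : M ⟶ N) (hf : Function.Surjective f.hom)
    (hM : IsTorsionIdeal 𝔞 M) :
    Function.Surjective (postcomp 𝔞 (Ext.mk₀ f) (add_zero 0)) := by
  intro y
  obtain ⟨x, hx⟩ := hf (eval 𝔞 N y)
  obtain ⟨z, rfl⟩ := eval_surjective hM x
  exact ⟨z, eval_injective 𝔞 N (by rw [eval_postcomp, hx])⟩

section

variable {S : ShortComplex (ModuleCat.{u} R)} (hS : S.ShortExact) (i : ℕ)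

include hS in
lemma exact_f_g : Function.Exact (postcomp 𝔞 (Ext.mk₀ S.f) (add_zero i))
    (postcomp 𝔞 (Ext.mk₀ S.g) (add_zero i)) :=
  postcomp_exact 𝔞 _ _ _ _ fun X => hS.exact_postcomp_f_g X i

lemma exact_g_extClass : Function.Exact (postcomp 𝔞 (Ext.mk₀ S.g) (add_zero i))
    (postcomp 𝔞 hS.extClass (rfl : i + 1 = i + 1)) :=
  postcomp_exact 𝔞 _ _ _ _ fun X => hS.exact_postcomp_g_extClass X i

lemma exact_extClass_f : Function.Exact (postcomp 𝔞 hS.extClass (rfl : i + 1 = i + 1))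
    (postcomp 𝔞 (Ext.mk₀ S.f) (add_zero (i + 1))) :=
  postcomp_exact 𝔞 _ _ _ _ fun X => hS.exact_postcomp_extClass_f X i

end

lemma subsingleton_of_isTorsionIdeal [IsNoetherianRing R] (i : ℕ) (T : ModuleCat.{u} R)
    (hT : IsTorsionIdeal 𝔞 T) : Subsingleton (ExtLimit 𝔞 (i + 1) T) := by
  let I := Injective.under T
  let e : ExtLimit 𝔞 0 T ≃ₗ[R] T :=
    LinearEquiv.ofBijective (eval 𝔞 T) ⟨eval_injective 𝔞 T, eval_surjective hT⟩
  let f : T →ₗ[R] ExtLimit 𝔞 0 I :=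
    postcomp 𝔞 (Ext.mk₀ (Injective.ι T)) (add_zero 0) ∘ₗ e.symm.toLinearMap
  have hf : Function.Injective f := (postcomp_injective 𝔞 (Injective.ι T)).comp e.symm.injective
  have hS := LinearMap.shortExact_shortComplexCoker hf
  have hJ := isTorsionIdeal 𝔞 0 I
  have := injective_extLimit_zero 𝔞 I
  have hinj : Injective (ModuleCat.of R (ExtLimit 𝔞 0 I)) :=
    Module.injective_object_of_injective_module R _
  have hzero (i : ℕ) : Subsingleton (ExtLimit 𝔞 (i + 1) f.shortComplexCoker.X₂) :=
    subsingleton_of_injective 𝔞 (ModuleCat.of R (ExtLimit 𝔞 0 I)) i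
  refine subsingleton_of_forall_eq 0 fun x => ?_
  obtain ⟨c, rfl⟩ := (exact_extClass_f 𝔞 hS i x).1 (Subsingleton.elim _ _)
  cases i with
  | zero =>
    obtain ⟨y, rfl⟩ := postcomp_surjective 𝔞 f.shortComplexCoker.g
      (Submodule.mkQ_surjective _) hJ c
    exact (exact_g_extClass 𝔞 hS 0).apply_apply_eq_zero y
  | succ i =>
    have := subsingleton_of_isTorsionIdeal i f.shortComplexCoker.X₃
      (hJ.of_surjective _ (Submodule.mkQ_surjective _))
    rw [Subsingleton.elim c 0, map_zero]

/-- The quotient of `M` by its submodule of `𝔞`-torsion elements. -/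
noncomputable abbrev torsionQuot (M : ModuleCat.{u} R) : ModuleCat.{u} R :=
  (eval 𝔞 M).shortComplexCoker.X₃

variable [IsNoetherianRing R] (M : ModuleCat.{u} R)

lemma subsingleton_torsionQuot : Subsingleton (ExtLimit 𝔞 0 (torsionQuot 𝔞 M)) := by
  have hS := LinearMap.shortExact_shortComplexCoker (eval_injective 𝔞 M)
  refine subsingleton_of_forall_eq 0 fun x => ?_
  have := subsingleton_of_isTorsionIdeal 𝔞 0 (eval 𝔞 M).shortComplexCoker.X₁ (isTorsionIdeal 𝔞 0 M)
  obtain ⟨y, rfl⟩ := (exact_g_extClass 𝔞 hS 0 x).1 (Subsingleton.elim _ _)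
  obtain ⟨z, hz⟩ := eval_surjective (M := (eval 𝔞 M).shortComplexCoker.X₁) (isTorsionIdeal 𝔞 0 M) y
  refine (exact_f_g 𝔞 hS 0 _).2 ⟨z, eval_injective 𝔞 M ?_⟩
  rw [eval_postcomp, hz]
  rfl

/-- Higher local cohomology does not change after killing the torsion submodule. -/
noncomputable def torsionQuotEquiv (i : ℕ) :
    ExtLimit 𝔞 (i + 1) M ≃ₗ[R] ExtLimit 𝔞 (i + 1) (torsionQuot 𝔞 M) :=
  LinearEquiv.ofBijective
    (postcomp 𝔞 (Ext.mk₀ (eval 𝔞 M).shortComplexCoker.g) (add_zero (i + 1))) <| by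
  have hS := LinearMap.shortExact_shortComplexCoker (eval_injective 𝔞 M)
  have h0 (i : ℕ) := subsingleton_of_isTorsionIdeal 𝔞 i (eval 𝔞 M).shortComplexCoker.X₁
    (isTorsionIdeal 𝔞 0 M)
  refine ⟨(injective_iff_map_eq_zero _).2 fun x hx => ?_, fun x => ?_⟩
  · obtain ⟨y, rfl⟩ := (exact_f_g 𝔞 hS (i + 1) x).1 hx
    rw [(h0 i).elim y 0, map_zero]
  · exact (exact_g_extClass 𝔞 hS (i + 1) x).1 ((h0 (i + 1)).elim _ _)

end ExtLimit

end

section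

open Abelian

variable {R : Type u} [CommRing R]

/-- All the modules `Ext^i_R(R/𝔞, M)` are finitely generated. -/
def ExtFinite (𝔞 : Ideal R) (M : ModuleCat.{u} R) : Prop :=
  ∀ i : ℕ, Module.Finite R (Ext (ModuleCat.of R (R ⧸ 𝔞)) M i)

lemma Module.Finite.of_functionExact [IsNoetherianRing R] {A B C : Type*} [AddCommGroup A]
    [Module R A] [AddCommGroup B] [Module R B] [AddCommGroup C] [Module R C] {f : A →ₗ[R] B}
    {g : B →ₗ[R] C} (h : Function.Exact f g) (hA : Module.Finite R A) (hC : Module.Finite R C) :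
    Module.Finite R B :=
  have := isNoetherian_of_range_eq_ker f g (LinearMap.exact_iff.1 h).symm
  inferInstance

namespace ExtFinite

variable {𝔞 : Ideal R}

lemma of_iso {M N : ModuleCat.{u} R} (e : M ≅ N) (h : ExtFinite 𝔞 M) : ExtFinite 𝔞 N := by
  intro i
  have := h i
  refine Module.Finite.of_surjective
    ((Ext.mk₀ e.hom).postcompOfLinear R (ModuleCat.of R (R ⧸ 𝔞)) (add_zero i)) fun y => ?_
  refine ⟨(Ext.mk₀ e.inv).postcompOfLinear R (ModuleCat.of R (R ⧸ 𝔞)) (add_zero i) y, ?_⟩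
  change (y.comp (Ext.mk₀ e.inv) (add_zero i)).comp (Ext.mk₀ e.hom) (add_zero i) = y
  rw [Ext.comp_assoc_of_second_deg_zero, Ext.mk₀_comp_mk₀, e.inv_hom_id, Ext.comp_mk₀_id]

lemma congr {M N : Type u} [AddCommGroup M] [AddCommGroup N] [Module R M] [Module R N]
    (e : M ≃ₗ[R] N) (h : ExtFinite 𝔞 (ModuleCat.of R M)) : ExtFinite 𝔞 (ModuleCat.of R N) :=
  h.of_iso e.toModuleIso

variable [IsNoetherianRing R]

lemma of_finite (M : Type u) [AddCommGroup M] [Module R M] [Module.Finite R M] :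
    ExtFinite 𝔞 (ModuleCat.of R M) :=
  fun _ => ModuleCat.finite_ext _ _ _ _

lemma finite_zero_of_mono {M N : ModuleCat.{u} R} (f : M ⟶ N) [Mono f]
    (h : Module.Finite R (Ext (ModuleCat.of R (R ⧸ 𝔞)) N 0)) :
    Module.Finite R (Ext (ModuleCat.of R (R ⧸ 𝔞)) M 0) :=
  Module.Finite.of_injective
    ((Ext.mk₀ f).postcompOfLinear R (ModuleCat.of R (R ⧸ 𝔞)) (add_zero 0))
    (Ext.postcomp_mk₀_injective_of_mono _ f)

variable {S : ShortComplex (ModuleCat.{u} R)} (hS : S.ShortExact)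
include hS

lemma middle (h₁ : ExtFinite 𝔞 S.X₁) (h₃ : ExtFinite 𝔞 S.X₃) : ExtFinite 𝔞 S.X₂ :=
  fun i => .of_functionExact (hS.exact_postcomp_f_g _ i) (h₁ i) (h₃ i)

lemma right (h₁ : ExtFinite 𝔞 S.X₁) (h₂ : ExtFinite 𝔞 S.X₂) : ExtFinite 𝔞 S.X₃ :=
  fun i => .of_functionExact (hS.exact_postcomp_g_extClass _ i) (h₂ i) (h₁ (i + 1))

end ExtFinite

namespace ExtLimit

variable (𝔞 : Ideal R)

lemma finite_ext_zero [IsNoetherianRing R] {M : ModuleCat.{u} R}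
    (h : Module.Finite R (Ext (ModuleCat.of R (R ⧸ 𝔞)) M 0)) :
    Module.Finite R (Ext (ModuleCat.of R (R ⧸ 𝔞)) (ModuleCat.of R (ExtLimit 𝔞 0 M)) 0) :=
  have : Mono (ModuleCat.ofHom (eval 𝔞 M)) :=
    (ModuleCat.mono_iff_injective _).2 (eval_injective 𝔞 M)
  ExtFinite.finite_zero_of_mono (ModuleCat.ofHom (eval 𝔞 M)) h

variable {𝔞} in
lemma eq_zero_of_smul_eq_zero {M : ModuleCat.{u} R} (h : Subsingleton (ExtLimit 𝔞 0 M)) {m : M}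
    {n : ℕ} (hm : ∀ a ∈ 𝔞 ^ n, a • m = 0) : m = 0 := by
  obtain ⟨x, rfl⟩ := exists_eval_eq hm
  rw [Subsingleton.elim x 0, map_zero]

lemma subsingleton_ext_zero {M : ModuleCat.{u} R} (h : Subsingleton (ExtLimit 𝔞 0 M)) :
    Subsingleton (Ext (ModuleCat.of R (R ⧸ 𝔞)) M 0) := by
  refine subsingleton_of_forall_eq 0 fun x => extEvalOne_injective 𝔞 M ?_
  rw [map_zero]
  refine eq_zero_of_smul_eq_zero h (n := 1) fun a ha => ?_
  rw [← map_smul, smul_eq_zero_of_mem x (by simpa using ha), map_zero]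

variable [IsNoetherianRing R] (I : ModuleCat.{u} R) [Injective I]

lemma subsingleton_torsionQuot_of_injective :
    (i : ℕ) → Subsingleton (ExtLimit 𝔞 i (torsionQuot 𝔞 I))
  | 0 => subsingleton_torsionQuot 𝔞 I
  | i + 1 => have := subsingleton_of_injective 𝔞 I i
    (torsionQuotEquiv 𝔞 I i).symm.toEquiv.subsingleton

lemma subsingleton_ext_torsionQuot_of_injective :
    (i : ℕ) → Subsingleton (Ext (ModuleCat.of R (R ⧸ 𝔞)) (torsionQuot 𝔞 I) i)
  | 0 => subsingleton_ext_zero 𝔞 (subsingleton_torsionQuot 𝔞 I)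
  | i + 1 => by
    have hS := LinearMap.shortExact_shortComplexCoker (eval_injective 𝔞 I)
    have := injective_extLimit_zero 𝔞 I
    have hinj : Injective (ModuleCat.of R (ExtLimit 𝔞 0 I)) :=
      Module.injective_object_of_injective_module R _
    refine subsingleton_of_forall_eq 0 fun x => ?_
    obtain ⟨y, rfl⟩ := (hS.exact_postcomp_g_extClass (ModuleCat.of R (R ⧸ 𝔞)) (i + 1) x).1
      (Ext.eq_zero_of_injective (I := ModuleCat.of R (ExtLimit 𝔞 0 I)) _)
    rw [Ext.eq_zero_of_injective (I := I) y, map_zero]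

end ExtLimit

end

section

open Abelian

variable {R : Type u} [CommRing R] [IsNoetherianRing R]

namespace ExtLimit

variable (𝔞 : Ideal R)

/-- Dimension shifting for a module without `𝔞`-torsion. -/
lemma exists_dimension_shift (M : ModuleCat.{u} R) (hM : Subsingleton (ExtLimit 𝔞 0 M)) :
    ∃ C : ModuleCat.{u} R, (ExtFinite 𝔞 M → ExtFinite 𝔞 C) ∧
      ∀ i, Nonempty (ExtLimit 𝔞 i C ≃ₗ[R] ExtLimit 𝔞 (i + 1) M) := by
  let I := Injective.under M
  let f : M →ₗ[R] torsionQuot 𝔞 I :=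
    ((eval 𝔞 I).shortComplexCoker.g).hom ∘ₗ (Injective.ι M).hom
  have hf : Function.Injective f := by
    refine (injective_iff_map_eq_zero _).2 fun x hx => ?_
    obtain ⟨y, hy⟩ : (Injective.ι M).hom x ∈ LinearMap.range (eval 𝔞 I) :=
      (Submodule.Quotient.mk_eq_zero _).1 hx
    obtain ⟨n, hn⟩ := isTorsionIdeal 𝔞 0 I y
    refine eq_zero_of_smul_eq_zero hM (n := n) fun a ha => ?_
    apply (ModuleCat.mono_iff_injective (Injective.ι M)).1 inferInstance
    change (Injective.ι M).hom _ = (Injective.ι M).hom _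
    rw [map_smul, ← hy, ← map_smul, hn a ha, map_zero, map_zero]
  have hS := LinearMap.shortExact_shortComplexCoker hf
  have hE := subsingleton_torsionQuot_of_injective 𝔞 I
  have hE' := subsingleton_ext_torsionQuot_of_injective 𝔞 I
  refine ⟨f.shortComplexCoker.X₃, fun h => ?_, fun i => ⟨LinearEquiv.ofBijective
    (postcomp 𝔞 hS.extClass (rfl : i + 1 = i + 1)) ⟨?_, fun x => ?_⟩⟩⟩
  · exact ExtFinite.right hS h fun i => (have := hE' i; inferInstance)
  · refine (injective_iff_map_eq_zero _).2 fun x hx => ?_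
    obtain ⟨y, rfl⟩ := (exact_g_extClass 𝔞 hS i x).1 hx
    rw [(hE i).elim y 0, map_zero]
  · exact (exact_extClass_f 𝔞 hS i x).1 ((hE (i + 1)).elim _ _)

theorem extFinite_and_finite_ext_zero (t : ℕ) (M : ModuleCat.{u} R) (hM : ExtFinite 𝔞 M)
    (h : ∀ i < t, Module.Finite R
      (Ext (ModuleCat.of R (R ⧸ 𝔞)) (ModuleCat.of R (ExtLimit 𝔞 i M)) 0) →
        ExtFinite 𝔞 (ModuleCat.of R (ExtLimit 𝔞 i M))) :
    (∀ i < t, ExtFinite 𝔞 (ModuleCat.of R (ExtLimit 𝔞 i M))) ∧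
      Module.Finite R (Ext (ModuleCat.of R (R ⧸ 𝔞)) (ModuleCat.of R (ExtLimit 𝔞 t M)) 0) := by
  induction t generalizing M with
  | zero => exact ⟨fun i hi => absurd hi (by lia), finite_ext_zero 𝔞 (hM 0)⟩
  | succ t ih =>
    have h0 := h 0 t.succ_pos (finite_ext_zero 𝔞 (hM 0))
    have hM' : ExtFinite 𝔞 (torsionQuot 𝔞 M) :=
      ExtFinite.right (LinearMap.shortExact_shortComplexCoker (eval_injective 𝔞 M)) h0 hM
    obtain ⟨C, hC, hCM⟩ := exists_dimension_shift 𝔞 _ (subsingleton_torsionQuot 𝔞 M)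
    let e (i : ℕ) : ExtLimit 𝔞 i C ≃ₗ[R] ExtLimit 𝔞 (i + 1) M :=
      (hCM i).some.trans (torsionQuotEquiv 𝔞 M i).symm
    have hfin {A B : ModuleCat.{u} R} (e : A ≅ B)
        (hA : Module.Finite R (Ext (ModuleCat.of R (R ⧸ 𝔞)) A 0)) :
        Module.Finite R (Ext (ModuleCat.of R (R ⧸ 𝔞)) B 0) :=
      ExtFinite.finite_zero_of_mono e.inv hA
    obtain ⟨h1, h2⟩ := ih C (hC hM') fun i hi hfg =>
      (h (i + 1) (by lia) (hfin (e i).toModuleIso hfg)).congr (e i).symm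
    refine ⟨fun i hi => ?_, hfin (e t).toModuleIso h2⟩
    cases i with
    | zero => exact h0
    | succ i => exact (h1 i (by lia)).congr (e i)

end ExtLimit

end

section

variable {R : Type*} [CommRing R] {M : Type*} [AddCommGroup M] [Module R M]

lemma Module.isArtinian_of_supportDim_le_zero [IsNoetherianRing R] [Module.Finite R M]
    (h : Module.supportDim R M ≤ 0) : IsArtinian R M := by
  rw [supportDim_eq_ringKrullDim_quotient_annihilator] at h
  have h0 : Ring.KrullDimLE 0 (R ⧸ annihilator R M) := Ring.krullDimLE_iff.2 h
  let _ : Module (R ⧸ annihilator R M) M := Module.quotientAnnihilator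
  have : IsArtinianRing (R ⧸ annihilator R M) :=
    isArtinianRing_iff_isNoetherianRing_krullDimLE_zero.2 ⟨inferInstance, h0⟩
  have : IsScalarTower R (R ⧸ annihilator R M) M := ⟨fun r s m => by
    obtain ⟨s, rfl⟩ := Ideal.Quotient.mk_surjective s
    exact mul_smul r s m⟩
  have : Module.Finite (R ⧸ annihilator R M) M :=
    Module.Finite.of_restrictScalars_finite R _ _
  exact isArtinian_of_surjective_algebraMap (S := R) (R := R ⧸ annihilator R M)
    Ideal.Quotient.mk_surjective

/-- The elements of `M` killed by the ideal `J`. -/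
def Submodule.killedBy (M : Type*) [AddCommGroup M] [Module R M] (J : Ideal R) :
    Submodule R M where
  carrier := {m | ∀ a ∈ J, a • m = 0}
  add_mem' hx hy a ha := by rw [smul_add, hx a ha, hy a ha, add_zero]
  zero_mem' _ _ := smul_zero _
  smul_mem' r x hx a ha := by rw [smul_comm, hx a ha, smul_zero]

@[simp]
lemma Submodule.mem_killedBy {J : Ideal R} {m : M} : m ∈ killedBy M J ↔ ∀ a ∈ J, a • m = 0 :=
  Iff.rfl

/-- The layer `x^k (L ∩ ker x^{k+1})` of a submodule `L`, a submodule of `ker x`. -/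
def Submodule.kerLayer (x : R) (k : ℕ) (L : Submodule R M) :
    Submodule R (LinearMap.ker (LinearMap.lsmul R M x)) :=
  ((L ⊓ LinearMap.ker (LinearMap.lsmul R M (x ^ (k + 1)))).map
    (LinearMap.lsmul R M (x ^ k))).comap (Submodule.subtype _)

lemma Submodule.mem_kerLayer {x : R} {k : ℕ} {L : Submodule R M}
    {m : LinearMap.ker (LinearMap.lsmul R M x)} :
    m ∈ L.kerLayer x k ↔ ∃ y ∈ L, x ^ (k + 1) • y = 0 ∧ x ^ k • y = m := by
  simp [kerLayer, and_assoc]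

lemma Submodule.kerLayer_mono {x : R} {k l : ℕ} (hkl : k ≤ l) {L L' : Submodule R M}
    (h : L ≤ L') : L.kerLayer x l ≤ L'.kerLayer x k := by
  intro m hm
  obtain ⟨y, hy, hy0, hym⟩ := mem_kerLayer.1 hm
  obtain ⟨d, rfl⟩ := Nat.exists_eq_add_of_le hkl
  refine mem_kerLayer.2 ⟨x ^ d • y, L'.smul_mem _ (h hy), ?_, ?_⟩
  · rw [smul_smul, ← pow_add, ← hy0]; congr 2; lia
  · rw [smul_smul, ← pow_add, hym]

lemma Submodule.le_of_kerLayer_le {x : R} (hx : ∀ m : M, ∃ n : ℕ, x ^ n • m = 0)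
    {L L' : Submodule R M} (hL : L ≤ L') (h : ∀ k, L'.kerLayer x k ≤ L.kerLayer x k) : L' ≤ L := by
  suffices ∀ n : ℕ, ∀ y ∈ L', x ^ n • y = 0 → y ∈ L from fun y hy => (hx y).elim (this · y hy)
  intro n
  induction n with
  | zero => intro y _ h; rw [pow_zero, one_smul] at h; rw [h]; exact L.zero_mem
  | succ k ih =>
    intro y hy hy0
    have hm : x ^ k • y ∈ LinearMap.ker (LinearMap.lsmul R M x) := by
      rwa [LinearMap.mem_ker, LinearMap.lsmul_apply, smul_smul, ← pow_succ']
    obtain ⟨z, hz, _, hzy⟩ := mem_kerLayer.1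
      (h k ((mem_kerLayer (m := ⟨_, hm⟩)).2 ⟨y, hy, hy0, rfl⟩))
    have := ih (y - z) (L'.sub_mem hy (hL hz)) (by rw [smul_sub, hzy, sub_self])
    simpa using L.add_mem this hz

/-- If `x` acts locally nilpotently with artinian kernel, then the module is artinian. -/
lemma isArtinian_of_ker_lsmul (x : R) (hx : ∀ m : M, ∃ n : ℕ, x ^ n • m = 0)
    [IsArtinian R (LinearMap.ker (LinearMap.lsmul R M x))] : IsArtinian R M := by
  refine monotone_stabilizes_iff_artinian.1 fun f => ?_
  let L (n : ℕ) : Submodule R M := (f n).ofDual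
  have hL {m n : ℕ} (h : m ≤ n) : L n ≤ L m := f.monotone h
  obtain ⟨N, hN⟩ := monotone_stabilizes_iff_artinian.2
    (inferInstance : IsArtinian R (LinearMap.ker (LinearMap.lsmul R M x)))
    ⟨fun n => OrderDual.toDual ((L n).kerLayer x n), fun m n h => Submodule.kerLayer_mono h (hL h)⟩
  have hstab (k : ℕ) := monotone_stabilizes_iff_artinian.2
    (inferInstance : IsArtinian R (LinearMap.ker (LinearMap.lsmul R M x)))
    ⟨fun n => OrderDual.toDual ((L n).kerLayer x k),
      fun m n h => Submodule.kerLayer_mono le_rfl (hL h)⟩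
  choose S hS using hstab
  let B := N ⊔ (Finset.range N).sup S
  have key (k n : ℕ) (hn : B ≤ n) : (L B).kerLayer x k ≤ (L n).kerLayer x k := by
    by_cases hk : k < N
    · have hSB : S k ≤ B := (Finset.le_sup (f := S) (Finset.mem_range.2 hk)).trans le_sup_right
      exact ((hS k B hSB).symm.trans (hS k n (hSB.trans hn))).ge
    · push Not at hk
      have hNB : N ≤ B := le_sup_left
      calc (L B).kerLayer x k ≤ (L N).kerLayer x N := Submodule.kerLayer_mono hk (hL hNB)
        _ = (L (max n k)).kerLayer x (max n k) := hN (max n k) (hk.trans (le_max_right _ _))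
        _ ≤ (L n).kerLayer x k := Submodule.kerLayer_mono (le_max_right _ _) (hL (le_max_left _ _))
  exact ⟨B, fun n hn => (le_antisymm (hL hn)
    (Submodule.le_of_kerLayer_le hx (hL hn) fun k => key k n hn)).symm⟩

/-- Melkersson's criterion: a torsion module is artinian if the submodule of elements killed by
the ideal is. -/
lemma isArtinian_of_killedBy_span (s : Finset R)
    (M : Type*) [AddCommGroup M] [Module R M] (hs : ∀ x ∈ s, ∀ m : M, ∃ n : ℕ, x ^ n • m = 0)
    [IsArtinian R (Submodule.killedBy M (Ideal.span (s : Set R)))] : IsArtinian R M := by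
  classical
  induction s using Finset.induction_on generalizing M with
  | empty =>
    have : Submodule.killedBy M (Ideal.span ((∅ : Finset R) : Set R)) = ⊤ := by
      ext; simp
    exact isArtinian_of_surjective _ (Submodule.killedBy M _).subtype
      fun m => ⟨⟨m, this ▸ Submodule.mem_top⟩, rfl⟩
  | insert x s _ ih =>
    let K := LinearMap.ker (LinearMap.lsmul R M x)
    let f : Submodule.killedBy K (Ideal.span (s : Set R)) →ₗ[R]
        Submodule.killedBy M (Ideal.span ((insert x s : Finset R) : Set R)) :=
      (K.subtype ∘ₗ Submodule.subtype _).codRestrict _ fun m => by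
        have hle : Ideal.span ((insert x s : Finset R) : Set R) ≤
            LinearMap.ker (LinearMap.toSpanSingleton R M (m : M)) := by
          rw [Ideal.span_le, Finset.coe_insert, Set.insert_subset_iff]
          exact ⟨m.1.2, fun a ha => congrArg Subtype.val (m.2 a (Ideal.subset_span ha))⟩
        exact fun a ha => hle ha
    have hf : Function.Injective f := fun a b h => by
      have h' : (f a : M) = f b := congrArg Subtype.val h
      exact Subtype.ext (Subtype.ext h')
    have := isArtinian_of_injective f hf
    have : IsArtinian R K := ih K fun a ha m =>
      (hs a (Finset.mem_insert_of_mem ha) m).imp fun n hn => Subtype.ext hn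
    exact isArtinian_of_ker_lsmul x (hs x (Finset.mem_insert_self _ _))

end

section

open Abelian

variable {R : Type u} [CommRing R] [IsNoetherianRing R] {𝔞 : Ideal R}

namespace ExtFinite

lemma of_ker_of_range {M N : Type u} [AddCommGroup M] [Module R M] [AddCommGroup N] [Module R N]
    (f : M →ₗ[R] N) (hk : ExtFinite 𝔞 (ModuleCat.of R (LinearMap.ker f)))
    (hr : ExtFinite 𝔞 (ModuleCat.of R (LinearMap.range f))) :
    ExtFinite 𝔞 (ModuleCat.of R M) := by
  refine middle (LinearMap.shortExact_shortComplexKer f.surjective_rangeRestrict) ?_ hr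
  exact hk.congr (LinearEquiv.ofEq _ _ (LinearMap.ker_rangeRestrict f).symm)

omit [IsNoetherianRing R] in
lemma of_surjective_smul {M : Type u} [AddCommGroup M] [Module R M] {x : R} (hx : x ∈ 𝔞)
    (hs : Function.Surjective (LinearMap.lsmul R M x))
    (hk : ExtFinite 𝔞 (ModuleCat.of R (LinearMap.ker (LinearMap.lsmul R M x)))) :
    ExtFinite 𝔞 (ModuleCat.of R M) := by
  have hS := LinearMap.shortExact_shortComplexKer hs
  intro i
  have := hk i
  refine Module.Finite.of_surjective
    ((Ext.mk₀ (LinearMap.lsmul R M x).shortComplexKer.f).postcompOfLinear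
      R (ModuleCat.of R (R ⧸ 𝔞)) (add_zero i)) fun y => ?_
  refine (hS.exact_postcomp_f_g _ i y).1 ?_
  have hg : (LinearMap.lsmul R M x).shortComplexKer.g = x • 𝟙 (ModuleCat.of R M) := by
    ext; rfl
  change Ext (ModuleCat.of R (R ⧸ 𝔞)) (ModuleCat.of R M) i at y
  change y.comp (Ext.mk₀ (LinearMap.lsmul R M x).shortComplexKer.g) (add_zero i) = 0
  rw [hg, Ext.mk₀_smul, Ext.comp_smul, Ext.comp_mk₀_id]
  exact ExtLimit.smul_eq_zero_of_mem y hx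

/-- If `M` is artinian and the elements killed by `𝔞` form a finitely generated module, then
all `Ext^i_R(R/𝔞, M)` are finitely generated. -/
theorem of_isArtinian (M : Type u) [AddCommGroup M] [Module R M] [IsArtinian R M]
    [hM : Module.Finite R (Submodule.killedBy M 𝔞)] : ExtFinite 𝔞 (ModuleCat.of R M) := by
  suffices ∀ K : Submodule R M, ExtFinite 𝔞 (ModuleCat.of R K) from
    (this ⊤).congr Submodule.topEquiv
  intro K
  induction K using IsArtinian.induction with
  | hgt K ih =>
  have ih' (L : Submodule R K) (hL : L ≠ ⊤) : ExtFinite 𝔞 (ModuleCat.of R L) :=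
    (ih _ ((Submodule.map_strictMono_of_injective K.subtype_injective
      (lt_top_iff_ne_top.2 hL)).trans_le (Submodule.map_subtype_le _ _))).congr
      (K.equivSubtypeMap L).symm
  by_cases h : ∀ x ∈ 𝔞, LinearMap.ker (LinearMap.lsmul R K x) = ⊤
  · have hK : K ≤ Submodule.killedBy M 𝔞 := fun m hm a ha => by
      have : (⟨m, hm⟩ : K) ∈ LinearMap.ker (LinearMap.lsmul R K a) := h a ha ▸ Submodule.mem_top
      exact congrArg Subtype.val this
    have : Module.Finite R K :=
      Module.Finite.of_injective (Submodule.inclusion hK) (Submodule.inclusion_injective hK)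
    exact .of_finite K
  · push Not at h
    obtain ⟨x, hx, hk⟩ := h
    by_cases hr : LinearMap.range (LinearMap.lsmul R K x) = ⊤
    · exact .of_surjective_smul hx (LinearMap.range_eq_top.1 hr) (ih' _ hk)
    · exact .of_ker_of_range _ (ih' _ hk) (ih' _ hr)

lemma finite_killedBy {M : ModuleCat.{u} R}
    (h : Module.Finite R (Ext (ModuleCat.of R (R ⧸ 𝔞)) M 0)) :
    Module.Finite R (Submodule.killedBy M 𝔞) := by
  have hle : Submodule.killedBy M 𝔞 ≤ LinearMap.range (extEvalOne 𝔞 M) := fun m hm =>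
    exists_extEvalOne_eq hm
  have := Module.Finite.range (extEvalOne 𝔞 M)
  exact Module.Finite.of_injective (Submodule.inclusion hle) (Submodule.inclusion_injective hle)

omit [IsNoetherianRing R] in
lemma _root_.IsTorsionIdeal.exists_pow_smul_eq_zero {M : Type u} [AddCommGroup M] [Module R M]
    (h : IsTorsionIdeal 𝔞 M) {x : R} (hx : x ∈ 𝔞) (m : M) : ∃ n : ℕ, x ^ n • m = 0 :=
  (h m).imp fun n hn => hn _ (Ideal.pow_mem_pow hx n)

lemma _root_.IsTorsionIdeal.isArtinian {M : Type u} [AddCommGroup M] [Module R M]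
    (h : IsTorsionIdeal 𝔞 M) [IsArtinian R (Submodule.killedBy M 𝔞)] : IsArtinian R M := by
  obtain ⟨s, rfl⟩ := IsNoetherian.noetherian 𝔞
  exact isArtinian_of_killedBy_span s M fun x hx m =>
    h.exists_pow_smul_eq_zero (Ideal.subset_span hx) m

/-- A torsion module in `FD_{≤0}` is cofinite as soon as `Hom(R/𝔞, M)` is finitely generated. -/
theorem of_memFD_zero (M : Type u) [AddCommGroup M] [Module R M] (hM : IsTorsionIdeal 𝔞 M)
    (hfd : MemFD R 0 M)
    (h : Module.Finite R (Ext (ModuleCat.of R (R ⧸ 𝔞)) (ModuleCat.of R M) 0)) :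
    ExtFinite 𝔞 (ModuleCat.of R M) := by
  obtain ⟨N, hN, hdim⟩ := hfd
  have : Module.Finite R N := Module.Finite.iff_fg.2 hN
  have hNext : ExtFinite 𝔞 (ModuleCat.of R N) := of_finite N
  have hS := LinearMap.shortExact_shortComplexCoker N.subtype_injective
  let e : (M ⧸ LinearMap.range N.subtype) ≃ₗ[R] M ⧸ N :=
    Submodule.quotEquivOfEq _ _ N.range_subtype
  have hD : Module.Finite R (Submodule.killedBy (M ⧸ LinearMap.range N.subtype) 𝔞) :=
    finite_killedBy (M := N.subtype.shortComplexCoker.X₃)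
      (.of_functionExact (hS.exact_postcomp_g_extClass _ 0) h (hNext 1))
  have hdimD : Module.supportDim R (Submodule.killedBy (M ⧸ LinearMap.range N.subtype) 𝔞) ≤ 0 :=
    (Module.supportDim_le_of_injective (e.toLinearMap ∘ₗ Submodule.subtype _)
      (e.injective.comp (Submodule.subtype_injective _))).trans hdim
  have := Module.isArtinian_of_supportDim_le_zero hdimD
  have := (hM.of_surjective _ (LinearMap.range N.subtype).mkQ_surjective).isArtinian
  exact middle hS hNext (of_isArtinian _)

end ExtFinite

end

section

variable {R : Type*} [CommRing R] [IsNoetherianRing R]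

lemma Ideal.exists_pow_le_killedBy_of_mem_minimalPrimes {𝔞 p : Ideal R} (hp : p ∈ minimalPrimes R)
    (h : 𝔞 ≤ p) : ∃ k : ℕ, ∃ s ∉ p, s ∈ Submodule.killedBy R (𝔞 ^ k) := by
  have : p.IsPrime := hp.isPrime
  let A := Localization.AtPrime p
  have hrad : 𝔞 ≤ (RingHom.ker (algebraMap R A)).radical := by
    intro x hx
    have hx' : algebraMap R A x ∈ ((⊥ : Ideal R).map (algebraMap R A)).radical := by
      rw [IsLocalization.AtPrime.radical_map_of_mem_minimalPrimes A p ⊥ hp]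
      exact Ideal.mem_map_of_mem _ (h hx)
    obtain ⟨k, hk⟩ := hx'
    exact ⟨k, by simpa using hk⟩
  obtain ⟨k, hk⟩ := Ideal.exists_pow_le_of_le_radical_of_fg hrad (IsNoetherian.noetherian _)
  have hsupp : (⟨p, this⟩ : PrimeSpectrum R) ∉ Module.support R (𝔞 ^ k : Ideal R) := by
    rw [Module.notMem_support_iff']
    intro m
    obtain ⟨s, hs⟩ := (IsLocalization.map_eq_zero_iff p.primeCompl A (m : R)).1 (hk m.2)
    exact ⟨s, s.2, Subtype.ext hs⟩
  rw [Module.mem_support_iff_of_finite, SetLike.not_le_iff_exists] at hsupp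
  obtain ⟨s, hs, hsp⟩ := hsupp
  refine ⟨k, s, hsp, fun a ha => ?_⟩
  have := Module.mem_annihilator.1 hs ⟨a, ha⟩
  rw [smul_eq_mul, mul_comm]
  exact congrArg Subtype.val this

lemma Submodule.finite_killedBy_pow (𝔞 : Ideal R) (M : Type*) [AddCommGroup M] [Module R M]
    (h : Module.Finite R (killedBy M 𝔞)) (n : ℕ) : Module.Finite R (killedBy M (𝔞 ^ n)) := by
  induction n with
  | zero =>
    have : killedBy M (𝔞 ^ 0) = ⊥ := eq_bot_iff.2 fun m hm => by
      simpa using hm 1 (by simp)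
    rw [this]
    infer_instance
  | succ n ih =>
    obtain ⟨s, rfl⟩ := IsNoetherian.noetherian 𝔞
    let f : killedBy M (Ideal.span (s : Set R) ^ (n + 1)) →ₗ[R]
        (s → killedBy M (Ideal.span (s : Set R) ^ n)) := LinearMap.pi fun x =>
      (LinearMap.lsmul R M x ∘ₗ Submodule.subtype _).codRestrict _ fun m a ha => by
        change a • (x : R) • (m : M) = 0
        rw [smul_smul]
        exact m.2 _ (pow_succ (Ideal.span (s : Set R)) n ▸
          Ideal.mul_mem_mul ha (Ideal.subset_span x.2))
    have hle : (LinearMap.ker f).map (Submodule.subtype _) ≤ killedBy M (Ideal.span (s : Set R)) := by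
      rintro _ ⟨m, hm, rfl⟩
      have : Ideal.span (s : Set R) ≤ LinearMap.ker (LinearMap.toSpanSingleton R M (m : M)) :=
        Ideal.span_le.2 fun x hx =>
          congrArg Subtype.val (congrFun (LinearMap.mem_ker.1 hm) ⟨x, hx⟩)
      exact fun a ha => this ha
    have hker : Module.Finite R ((LinearMap.ker f).map (Submodule.subtype _)) :=
      Module.Finite.of_injective (Submodule.inclusion hle) (Submodule.inclusion_injective hle)
    exact .of_functionExact (LinearMap.exact_subtype_ker_map f)
      (Module.Finite.equiv (Submodule.equivSubtypeMap _ _).symm) inferInstance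

end

section

variable {R : Type u} [CommRing R] {𝔞 : Ideal R}

lemma IsTorsionIdeal.support_subset {M : Type u} [AddCommGroup M] [Module R M]
    (h : IsTorsionIdeal 𝔞 M) : Module.support R M ⊆ PrimeSpectrum.zeroLocus (𝔞 : Set R) := by
  intro p hp a ha
  obtain ⟨m, hm⟩ := Module.mem_support_iff'.1 hp
  by_contra hap
  obtain ⟨n, hn⟩ := h m
  exact hm (a ^ n) (fun h' => hap (p.2.mem_of_pow_mem n h')) (hn _ (Ideal.pow_mem_pow ha n))

lemma MemFD.of_moduleDim_le {n : ℕ} {M : Type u} [AddCommGroup M] [Module R M]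
    (h : moduleDim R M ≤ n) : MemFD R n M :=
  ⟨⊥, Submodule.fg_bot, (Module.supportDim_le_of_surjective (Submodule.mkQ ⊥)
    (Submodule.mkQ_surjective _)).trans h⟩

lemma MemFD.congr {n : ℕ} {M N : Type u} [AddCommGroup M] [Module R M] [AddCommGroup N]
    [Module R N] (e : M ≃ₗ[R] N) (h : MemFD R n M) : MemFD R n N := by
  obtain ⟨K, hK, hdim⟩ := h
  exact ⟨K.map e.toLinearMap, hK.map _, (Module.supportDim_eq_of_equiv
    (Submodule.Quotient.equiv K _ e rfl)).symm.le.trans hdim⟩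

lemma MemFD.of_ringKrullDim_le_one [IsNoetherianRing R] (hR : ringKrullDim R ≤ 1) {M : Type u}
    [AddCommGroup M] [Module R M] (hM : IsTorsionIdeal 𝔞 M)
    (h : Module.Finite R (Submodule.killedBy M 𝔞)) : MemFD R 0 M := by
  obtain ⟨n, hn⟩ := monotone_stabilizes_iff_noetherian.2 (inferInstance : IsNoetherian R R)
    ⟨fun n => Submodule.killedBy R (𝔞 ^ n), fun m n hmn x hx a ha =>
      hx a (Ideal.pow_le_pow_right hmn ha)⟩
  have hn (k : ℕ) : Submodule.killedBy R (𝔞 ^ k) ≤ Submodule.killedBy R (𝔞 ^ n) := by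
    rcases le_total k n with hk | hk
    · exact fun x hx a ha => hx a (Ideal.pow_le_pow_right hk ha)
    · exact (hn k hk).ge
  let N := Submodule.killedBy M (𝔞 ^ n)
  refine ⟨N, Module.Finite.iff_fg.1 (Submodule.finite_killedBy_pow 𝔞 M h n), ?_⟩
  refine Order.krullDim_nonpos_iff_forall_isMax.2 fun p => ?_
  refine isMax_iff_forall_not_lt.2 fun q hpq => ?_
  have hpq : p.1.asIdeal < q.1.asIdeal := hpq
  have hp : p.1.asIdeal ∈ minimalPrimes R :=
    (Ring.krullDimLE_one_iff.1 (Ring.krullDimLE_iff.2 (by exact_mod_cast hR)) _ p.1.2).resolve_right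
      fun hmax => q.1.2.ne_top (hmax.1.2 _ hpq)
  have hap : 𝔞 ≤ p.1.asIdeal := (hM.of_surjective N.mkQ N.mkQ_surjective).support_subset p.2
  obtain ⟨k, s, hs, hsk⟩ := Ideal.exists_pow_le_killedBy_of_mem_minimalPrimes hp hap
  refine Module.notMem_support_iff'.2 (fun m => ⟨s, hs, ?_⟩) p.2
  obtain ⟨m, rfl⟩ := N.mkQ_surjective m
  rw [← map_smul]
  refine (Submodule.Quotient.mk_eq_zero _).2 fun a ha => ?_
  rw [smul_smul]
  have : a * s = 0 := hn k hsk a ha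
  rw [this, zero_smul]

end

/-- Yang–Shen, Proposition 4.1(1) (module case): let `𝔞` be a proper ideal of a noetherian
ring `R`, `t ≥ 0`, and `M` an `R`-module with `Ext^i_R(R/𝔞, M)` finitely generated for all `i`.
If `H^i_𝔞(M) ∈ FD_{≤0}` for all `i < t` (in particular if `dim_R H^i_𝔞(M) ≤ 0` for all `i < t`,
or if `dim R ≤ 1`), then `H^i_𝔞(M)` is `𝔞`-cofinite for all `i < t` and
`Hom_R(R/𝔞, H^t_𝔞(M))` is finitely generated. -/
theorem localCohomology_isCofinite_of_memFD_zero
    {R : Type u} [CommRing R] [IsNoetherianRing R] (𝔞 : Ideal R) (ha : 𝔞 ≠ ⊤) (t : ℕ)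
    (M : ModuleCat.{u} R) (hext : ∀ i : ℕ, Module.Finite R (extIdeal 𝔞 i M))
    (h : (∀ i : ℕ, i < t → MemFD R 0 ((localCohomology 𝔞 i).obj M)) ∨
      (∀ i : ℕ, i < t → moduleDim R ((localCohomology 𝔞 i).obj M) ≤ 0) ∨
      ringKrullDim R ≤ 1) :
    (∀ i : ℕ, i < t → IsCofinite 𝔞 ((localCohomology 𝔞 i).obj M)) ∧
      Module.Finite R ((R ⧸ 𝔞) →ₗ[R] ((localCohomology 𝔞 t).obj M)) := by
  let e (i : ℕ) : (localCohomology 𝔞 i).obj M ≃ₗ[R] ExtLimit 𝔞 i M := localCohomologyEquiv 𝔞 i M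
  have htors (i : ℕ) : IsTorsionIdeal 𝔞 (ExtLimit 𝔞 i M) := ExtLimit.isTorsionIdeal 𝔞 i M
  have hM : ExtFinite 𝔞 M := fun i =>
    have : Module.Finite R (extObj (ModuleCat.of R (R ⧸ 𝔞)) M i) := hext i
    Module.Finite.equiv (extEquiv (ModuleCat.of R (R ⧸ 𝔞)) M i)
  have hfd (i : ℕ) (hi : i < t) (hfg : Module.Finite R
      (Abelian.Ext (ModuleCat.of R (R ⧸ 𝔞)) (ModuleCat.of R (ExtLimit 𝔞 i M)) 0)) :
      MemFD R 0 (ExtLimit 𝔞 i M) := by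
    rcases h with h | h | h
    · exact (h i hi).congr (e i)
    · exact MemFD.congr (e i) (.of_moduleDim_le (h i hi))
    · exact .of_ringKrullDim_le_one h (htors i) (ExtFinite.finite_killedBy hfg)
  obtain ⟨h₁, h₂⟩ := ExtLimit.extFinite_and_finite_ext_zero 𝔞 t M hM fun i hi hfg =>
    .of_memFD_zero _ (htors i) (hfd i hi hfg) hfg
  refine ⟨fun i hi => ⟨?_, fun j => ?_⟩, ?_⟩
  · exact ((htors i).of_injective (e i).toLinearMap (e i).injective).support_subset
  · have := (h₁ i hi).congr (N := (localCohomology 𝔞 i).obj M) (e i).symm j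
    exact Module.Finite.equiv
      (extEquiv (ModuleCat.of R (R ⧸ 𝔞)) ((localCohomology 𝔞 i).obj M) j).symm
  · have : Module.Finite R ((R ⧸ 𝔞) →ₗ[R] ExtLimit 𝔞 t M) :=
      Module.Finite.equiv (Abelian.Ext.linearEquiv₀.trans (ModuleCat.homLinearEquiv
        (M := ModuleCat.of R (R ⧸ 𝔞)) (N := ModuleCat.of R (ExtLimit 𝔞 t M)) (S := R)))
    exact Module.Finite.equiv (LinearEquiv.congrRight (e t).symm)
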